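/- Let L be a finite-dimensional solvable Leibniz algebra over a field F that is minimally non-supersolvable (L is not supersolvable but every proper subalgebra of L is supersolvable). Then L is two-generated. -/

import Mathlib

/-!
Basic theory of (left) Leibniz algebras, formalized over an arbitrary field `F`.
A Leibniz algebra structure on an `F`-vector space `L` is given by a bilinear
multiplication `m : L →ₗ[F] L →ₗ[F] L` satisfying the left Leibniz identity.
-/

open Submodule Module

section LeibnizDefs

variable {F : Type*} [Field F] {L : Type*} [AddCommGroup L] [Module F L]
variable (m : L →ₗ[F] L →ₗ[F] L)

/-- The left Leibniz identity: `a(bc) = (ab)c + b(ac)`. -/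
def IsLeibniz : Prop :=
  ∀ a b c : L, m a (m b c) = m (m a b) c + m b (m a c)

/-- The multiplication is antisymmetric, i.e. the algebra is a Lie algebra. -/
def IsLie : Prop := ∀ a b : L, m a b = - m b a

/-- The product of two subspaces: the span of all products `x·y`, `x ∈ P`, `y ∈ Q`. -/
abbrev mprod (P Q : Submodule F L) : Submodule F L := Submodule.map₂ m P Q

/-- A subalgebra: a subspace closed under multiplication. -/
def IsSubalg (S : Submodule F L) : Prop := ∀ x ∈ S, ∀ y ∈ S, m x y ∈ S

/-- An ideal of `L`: a subspace `I` with `L·I ⊆ I` and `I·L ⊆ I`. -/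
def IsIdeal (I : Submodule F L) : Prop :=
  ∀ (x : L), ∀ y ∈ I, m x y ∈ I ∧ m y x ∈ I

/-- An ideal `I` of a subalgebra `S`. -/
def IsIdealOf (S I : Submodule F L) : Prop :=
  I ≤ S ∧ ∀ x ∈ S, ∀ y ∈ I, m x y ∈ I ∧ m y x ∈ I

/-- A minimal ideal: a nonzero ideal containing no nonzero proper subideal of `L`. -/
def IsMinIdeal (A : Submodule F L) : Prop :=
  IsIdeal m A ∧ A ≠ ⊥ ∧ ∀ J, IsIdeal m J → J ≤ A → J = ⊥ ∨ J = A

/-- The derived series of a subspace: `S^(0) = S`, `S^(n+1) = S^(n)·S^(n)`. -/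
def derSeries (S : Submodule F L) : ℕ → Submodule F L
  | 0 => S
  | n + 1 => mprod m (derSeries S n) (derSeries S n)

/-- A subalgebra is solvable if its derived series reaches `0`. -/
def IsSolvableSub (S : Submodule F L) : Prop := ∃ n, derSeries m S n = ⊥

/-- The Leibniz algebra `L` is solvable. -/
abbrev IsSolvableAlg : Prop := IsSolvableSub m (⊤ : Submodule F L)

/-- The lower central series of a subspace: `N^1 = N`, `N^(k+1) = N·N^k`. -/
def lcSeries (N : Submodule F L) : ℕ → Submodule F L
  | 0 => N
  | k + 1 => mprod m N (lcSeries N k)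

/-- A subalgebra is nilpotent if its lower central series reaches `0`. -/
def IsNilpotentSub (N : Submodule F L) : Prop := ∃ k, lcSeries m N k = ⊥

/-- A subalgebra `S` is strongly solvable if `S² = S·S` is nilpotent. -/
def IsStronglySolvable (S : Submodule F L) : Prop :=
  IsNilpotentSub m (mprod m S S)

/-- A maximal subalgebra: a proper subalgebra not contained in any larger proper
subalgebra. -/
def IsMaxSubalg (S : Submodule F L) : Prop :=
  IsSubalg m S ∧ S ≠ ⊤ ∧ ∀ T, IsSubalg m T → S ≤ T → T = S ∨ T = ⊤

/-- The Frattini subalgebra `F(L)`: the intersection of all maximal subalgebras. -/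
def frattiniSub : Submodule F L := sInf {S | IsMaxSubalg m S}

/-- The Frattini ideal `φ(L)`: the largest ideal contained in the Frattini
subalgebra. -/
def frattiniIdeal : Submodule F L :=
  sSup {I | IsIdeal m I ∧ I ≤ frattiniSub m}

/-- `Leib(L)`: the span of all squares `x·x`. -/
def leibIdeal : Submodule F L := Submodule.span F {z | ∃ x : L, z = m x x}

/-- The subalgebra generated by a set. -/
def genBy (s : Set L) : Submodule F L := sInf {S | IsSubalg m S ∧ s ⊆ S}

/-- A subalgebra is two-generated if it is generated as an algebra by two elements. -/
def TwoGenerated (S : Submodule F L) : Prop := ∃ x y : L, genBy m {x, y} = S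

/-- A subalgebra `S` is supersolvable if there is a chain of ideals of `S`,
`0 = S₀ ⊂ S₁ ⊂ ⋯ ⊂ Sₙ = S`, with `dim Sᵢ = i`. -/
def IsSupersolvable (S : Submodule F L) : Prop :=
  ∃ (n : ℕ) (c : ℕ → Submodule F L), c 0 = ⊥ ∧ c n = S ∧
    (∀ i, i < n → c i ≤ c (i + 1)) ∧
    (∀ i, i ≤ n → IsIdealOf m S (c i)) ∧
    (∀ i, i ≤ n → Module.finrank F (c i) = i)

/-- A subspace `S` is nil on `L` if left multiplication by each of its elements is a
nilpotent operator. -/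
def IsNilOn (S : Submodule F L) : Prop :=
  ∀ x ∈ S, IsNilpotent (m x : Module.End F L)

open scoped TensorProduct in
/-- A subspace `S` is triangulable on `L` if, after extending scalars to the algebraic
closure `K` of `F`, the space `K ⊗ L` admits a basis with respect to which the left
multiplication operators by all elements of `K ⊗ S` are upper triangular matrices.
(Since upper triangular matrices form a `K`-subspace of matrices, it suffices that the
base-changed left multiplication by each `x ∈ S` is upper triangular.) -/
def IsTriangulableOn (S : Submodule F L) : Prop :=
  ∃ (n : ℕ) (b : Basis (Fin n) (AlgebraicClosure F) ((AlgebraicClosure F) ⊗[F] L)),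
    ∀ x ∈ S, ∀ i j : Fin n, j < i →
      LinearMap.toMatrix b b (LinearMap.baseChange (AlgebraicClosure F) (m x)) i j = 0

end LeibnizDefs

section Helpers

variable {F : Type*} [Field F] {L : Type*} [AddCommGroup L] [Module F L]

/-- A chain of ideals of `S` from `A` to `S` with steps of dimension at most one. -/
def WChain (m : L →ₗ[F] L →ₗ[F] L) (S A : Submodule F L) : Prop :=
  ∃ (n : ℕ) (c : ℕ → Submodule F L), c 0 = A ∧ c n = S ∧
    (∀ i, i < n → c i ≤ c (i + 1)) ∧
    (∀ i, i ≤ n → IsIdealOf m S (c i)) ∧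
    (∀ i, i < n → ∃ v, c (i + 1) ≤ c i ⊔ Submodule.span F {v})

theorem wchain_of_ss [FiniteDimensional F L] {m : L →ₗ[F] L →ₗ[F] L} {S : Submodule F L}
    (h : IsSupersolvable m S) : WChain m S ⊥ := by
  obtain ⟨n, c, h0, hn, hle, hid, hd⟩ := h
  refine ⟨n, c, h0, hn, hle, hid, ?_⟩
  intro i hi
  have h1 := hd i hi.le
  have h2 := hd (i + 1) hi
  have hlt : c i < c (i + 1) := by
    refine lt_of_le_of_ne (hle i hi) ?_
    intro he
    rw [he] at h1
    omega
  obtain ⟨v, hv, hv'⟩ := SetLike.exists_of_lt hlt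
  refine ⟨v, ?_⟩
  have hle2 : c i ⊔ span F {v} ≤ c (i + 1) :=
    sup_le hlt.le (by rw [span_singleton_le_iff_mem]; exact hv)
  have hlt2 : c i < c i ⊔ span F {v} := by
    refine lt_of_le_of_ne le_sup_left ?_
    intro he
    apply hv'
    rw [he]
    exact mem_sup_right (mem_span_singleton_self v)
  have h3 := Submodule.finrank_lt_finrank_of_lt hlt2
  exact (Submodule.eq_of_le_of_finrank_le hle2 (by omega)).ge

theorem ss_of_wchain [FiniteDimensional F L] {m : L →ₗ[F] L →ₗ[F] L} {S : Submodule F L}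
    (h : WChain m S ⊥) : IsSupersolvable m S := by
  obtain ⟨n, c, h0, hn, hle, hid, hs⟩ := h
  have key : ∀ k, k ≤ n → ∃ (N : ℕ) (d : ℕ → Submodule F L), d 0 = ⊥ ∧ d N = c k ∧
    (∀ i, i < N → d i ≤ d (i + 1)) ∧ (∀ i, i ≤ N → IsIdealOf m S (d i)) ∧
    (∀ i, i ≤ N → Module.finrank F (d i) = i) := by
    intro k
    induction k with
    | zero =>
      intro _
      refine ⟨0, fun _ => ⊥, rfl, h0.symm, by simp, ?_, ?_⟩
      · intro i hi
        have := hid 0 (Nat.zero_le _)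
        rwa [h0] at this
      · intro i hi
        obtain rfl : i = 0 := by omega
        simp
    | succ k ih =>
      intro hk
      obtain ⟨N, d, d0, dN, dle, did, dd⟩ := ih (by omega)
      by_cases he : c k = c (k + 1)
      · exact ⟨N, d, d0, dN.trans he, dle, did, dd⟩
      · have hlt : c k < c (k + 1) := lt_of_le_of_ne (hle k hk) he
        have hf1 := Submodule.finrank_lt_finrank_of_lt hlt
        obtain ⟨v, hv⟩ := hs k hk
        have hf2 : finrank F (c (k + 1)) ≤ finrank F (c k) + 1 := by
          calc finrank F (c (k + 1)) ≤ finrank F (c k ⊔ span F {v} : Submodule F L) :=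
                Submodule.finrank_mono hv
            _ ≤ finrank F (c k) + finrank F (span F {v}) :=
                Submodule.finrank_add_le_finrank_add_finrank _ _
            _ ≤ _ := by
                have := finrank_span_le_card (R := F) ({v} : Set L)
                simp at this
                omega
        have hN := dd N le_rfl
        rw [dN] at hN
        refine ⟨N + 1, fun i => if i ≤ N then d i else c (k + 1), by simp [d0], by simp, ?_, ?_, ?_⟩
        · intro i hi
          by_cases h : i + 1 ≤ N
          · have h' : i ≤ N := by omega
            simp only [h, h', if_true]
            exact dle i h
          · obtain rfl : i = N := by omega
            simp only [h, le_refl, if_true, if_false]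
            rw [dN]; exact hlt.le
        · intro i hi
          by_cases h : i ≤ N
          · simp only [h, if_true]; exact did i h
          · simp only [h, if_false]; exact hid _ hk
        · intro i hi
          by_cases h : i ≤ N
          · beta_reduce; rw [if_pos h]; exact dd i h
          · beta_reduce; rw [if_neg h]; omega
  obtain ⟨N, d, d0, dN, r⟩ := key n le_rfl
  exact ⟨N, d, d0, dN.trans hn, r⟩

/-- The first place where a chain leaves `D` inside `K`. -/
theorem WChain.first {m : L →ₗ[F] L →ₗ[F] L} {S A : Submodule F L}
    (h : WChain m S A) (D K : Submodule F L) (hA : A ≤ D) (hK : K ≤ S) (hKD : ¬ K ≤ D) :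
    ∃ E' E : Submodule F L, IsIdealOf m S E' ∧ IsIdealOf m S E ∧ E' ⊓ K ≤ D ∧
      ∃ w ∈ E, w ∈ K ∧ w ∉ D ∧ E ≤ E' ⊔ span F {w} := by
  classical
  obtain ⟨n, c, h0, hn, hle, hid, hs⟩ := h
  have hex : ∃ i, ¬ c i ⊓ K ≤ D := ⟨n, by rwa [hn, inf_eq_right.2 hK]⟩
  have hi := Nat.find_spec hex
  have hmin : ∀ j < Nat.find hex, c j ⊓ K ≤ D := fun j hj => not_not.1 (Nat.find_min hex hj)
  have hin : Nat.find hex ≤ n := Nat.find_min' hex (by rwa [hn, inf_eq_right.2 hK])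
  generalize Nat.find hex = i at hi hmin hin
  rcases i with _ | i
  · exact absurd (inf_le_left.trans (h0.le.trans hA)) hi
  obtain ⟨w, ⟨hwE, hwK⟩, hwD⟩ := SetLike.not_le_iff_exists.1 hi
  refine ⟨c i, c (i + 1), hid _ (by omega), hid _ hin, hmin i (by omega), w, hwE, hwK, hwD, ?_⟩
  obtain ⟨v, hv⟩ := hs i hin
  obtain ⟨e, he, t, ht, hw⟩ := mem_sup.1 (hv hwE)
  obtain ⟨r, rfl⟩ := mem_span_singleton.1 ht
  have hr : r ≠ 0 := by
    rintro rfl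
    apply hwD
    apply hmin i (by omega)
    refine ⟨?_, hwK⟩
    rw [← hw]; simpa using he
  refine hv.trans (sup_le le_sup_left ?_)
  rw [span_singleton_le_iff_mem]
  have : v = -(r⁻¹ • e) + r⁻¹ • w := by
    rw [← hw, smul_add, smul_smul, inv_mul_cancel₀ hr, one_smul]; abel
  rw [this]
  exact add_mem (mem_sup_left (neg_mem (smul_mem _ _ he)))
    (mem_sup_right (smul_mem _ _ (mem_span_singleton_self w)))

theorem isSubalg_genBy (m : L →ₗ[F] L →ₗ[F] L) (s : Set L) : IsSubalg m (genBy m s) := by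
  intro x hx y hy
  simp only [genBy, mem_sInf] at *
  intro S hS
  exact hS.1 x (hx S hS) y (hy S hS)

theorem subset_genBy (m : L →ₗ[F] L →ₗ[F] L) (s : Set L) : s ⊆ genBy m s := by
  intro x hx
  simp only [genBy, SetLike.mem_coe, mem_sInf]
  intro S hS
  exact hS.2 hx

theorem genBy_le (m : L →ₗ[F] L →ₗ[F] L) {s : Set L} {S : Submodule F L}
    (h : IsSubalg m S) (hs : s ⊆ S) : genBy m s ≤ S := sInf_le ⟨h, hs⟩

theorem isSubalg_sup {m : L →ₗ[F] L →ₗ[F] L} {S A : Submodule F L} (hS : IsSubalg m S)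
    (hA : IsIdeal m A) : IsSubalg m (S ⊔ A) := by
  intro x hx y hy
  obtain ⟨s, hs, a, ha, rfl⟩ := mem_sup.1 hx
  obtain ⟨t, ht, b, hb, rfl⟩ := mem_sup.1 hy
  have h : m (s + a) (t + b) = m s t + (m s b + m a (t + b)) := by
    simp only [map_add, LinearMap.add_apply]; abel
  rw [h]
  exact add_mem (mem_sup_left (hS s hs t ht)) (mem_sup_right
    (add_mem (hA s b hb).1 (hA _ a ha).2))

/-- left operators bracket -/
theorem leib_op {m : L →ₗ[F] L →ₗ[F] L} (hm : IsLeibniz m) (a b c : L) :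
    m (m a b) c = m a (m b c) - m b (m a c) := by
  rw [hm a b c]; abel

theorem sq_op {m : L →ₗ[F] L →ₗ[F] L} (hm : IsLeibniz m) (a c : L) :
    m (m a a) c = 0 := by
  rw [leib_op hm]; abel

/-- Existence of two elements generating `L` modulo `A`. -/
theorem exists_pair [FiniteDimensional F L] (m : L →ₗ[F] L →ₗ[F] L) (hm : IsLeibniz m)
    (hproper : ∀ S : Submodule F L, IsSubalg m S → S ≠ ⊤ → IsSupersolvable m S)
    (A C : Submodule F L) (hA : IsIdeal m A) (hAbot : A ≠ ⊥)
    (hC : ∀ x, x ∈ C ↔ ∀ a ∈ A, m x a = 0) (hAC : A ≤ C)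
    (hirr : ∀ U : Submodule F L, U ≤ A → (∀ x, ∀ u ∈ U, m x u ∈ U) → U = ⊥ ∨ U = A)
    (hline : ∀ a ∈ A, a ≠ 0 → ¬ ∀ x, ∃ r : F, m x a = r • a)
    (hch : WChain m ⊤ A)
    (z : L) (hz : z ∉ C) (hzl : ∀ s, ∃ l : F, m s z - l • z ∈ C)
    (hzk : ∀ a ∈ A, m z a = 0 → a = 0) :
    ∃ x y : L, genBy m {x, y} ⊔ A = ⊤ := by
  by_contra hno
  push Not at hno
  have hW : ∀ x y, ∃ B : Submodule F L, x ∈ B ∧ y ∈ B ∧ A ≤ B ∧ WChain m B ⊥ := by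
    intro x y
    refine ⟨genBy m {x, y} ⊔ A, ?_, ?_, le_sup_right, wchain_of_ss (hproper _
      (isSubalg_sup (isSubalg_genBy m _) hA) (hno x y))⟩
    · exact mem_sup_left (subset_genBy m _ (by simp))
    · exact mem_sup_left (subset_genBy m _ (by simp))
  have hU : ∀ x y, ∃ a ∈ A, a ≠ 0 ∧ ∃ r t : F, m x a = r • a ∧ m y a = t • a := by
    intro x y
    obtain ⟨B, hx, hy, hAB, hB⟩ := hW x y
    obtain ⟨E', E, hE', hE, hK, w, hwE, hwA, hw0, hle⟩ := hB.first ⊥ A bot_le hAB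
      (by rwa [le_bot_iff])
    have hx' : ∀ x ∈ B, ∃ r : F, m x w = r • w := by
      intro x hx
      have h1 := hle (hE.2 x hx w hwE).1
      obtain ⟨e, he, t, ht, hw⟩ := mem_sup.1 h1
      obtain ⟨r, rfl⟩ := mem_span_singleton.1 ht
      have h2 : e ∈ A := by
        have : e = m x w - r • w := by rw [← hw]; abel
        rw [this]
        exact sub_mem (hA x w hwA).1 (smul_mem _ _ hwA)
      have h3 : e = 0 := by simpa using hK ⟨he, h2⟩
      exact ⟨r, by rw [← hw, h3, zero_add]⟩
    obtain ⟨r, hr⟩ := hx' x hx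
    obtain ⟨t, ht⟩ := hx' y hy
    exact ⟨w, hwA, by simpa using hw0, r, t, hr, ht⟩
  have hCt : ∀ c ∈ C, ∀ a ∈ A, m c a = 0 := fun c hc => (hC c).1 hc
  obtain ⟨a0, ha0, ha0'⟩ := Submodule.exists_mem_ne_zero_of_ne_bot hAbot
  -- z central
  have hzc : ∀ s, ∀ a ∈ A, m s (m z a) = m z (m s a) := by
    intro s
    obtain ⟨l, hl⟩ := hzl s
    have h1 : ∀ a ∈ A, m (m s z) a = l • m z a := by
      intro a ha
      have := hCt _ hl a ha
      rw [map_sub, map_smul, LinearMap.sub_apply, LinearMap.smul_apply] at this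
      exact sub_eq_zero.1 this
    obtain ⟨a, ha, hane, r, t, hr, ht⟩ := hU s z
    have h2 := h1 a ha
    rw [leib_op hm, ht, map_smul, hr, map_smul, ht, smul_comm, sub_self] at h2
    have hl0 : l = 0 := by
      by_contra hl0
      have := smul_eq_zero.1 h2.symm
      rcases this with h | h
      · exact hl0 h
      · rw [← ht] at h; exact hane (hzk a ha h)
    intro a ha
    have h3 := h1 a ha
    rw [hl0, zero_smul, leib_op hm] at h3
    exact sub_eq_zero.1 h3
  -- commuting elements are scalar
  have hscal : ∀ w, (∀ s, ∀ a ∈ A, m s (m w a) = m w (m s a)) →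
      ∃ b : F, ∀ a ∈ A, m w a = b • a := by
    intro w hw
    obtain ⟨a, ha, hane, r, t, hr, ht⟩ := hU w w
    refine ⟨r, ?_⟩
    have := hirr (A ⊓ LinearMap.ker (m w - r • LinearMap.id)) inf_le_left (by
      rintro x u ⟨hu, hu'⟩
      refine ⟨(hA x u hu).1, ?_⟩
      simp only [SetLike.mem_coe, LinearMap.mem_ker, LinearMap.sub_apply, LinearMap.smul_apply,
        LinearMap.id_apply, sub_eq_zero] at hu' ⊢
      rw [← hw x u hu, hu', map_smul])
    rcases this with h | h
    · exfalso
      apply hane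
      have : a ∈ A ⊓ LinearMap.ker (m w - r • LinearMap.id) :=
        ⟨ha, by simp [hr]⟩
      rw [h] at this
      simpa using this
    · intro a ha
      rw [← h] at ha
      simpa [sub_eq_zero] using ha.2
  obtain ⟨b, hb⟩ := hscal z hzc
  have hb0 : b ≠ 0 := by
    rintro rfl
    apply hz
    rw [hC]
    simpa using hb
  -- second step
  obtain ⟨E', E, hE', hE, hK, w, hwE, -, hwD, hle⟩ := hch.first (C ⊔ span F {z}) ⊤
    (hAC.trans le_sup_left) le_rfl (by
      intro h
      apply hline a0 ha0 ha0'
      intro x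
      obtain ⟨c, hc, t, ht, rfl⟩ := mem_sup.1 (h (mem_top : x ∈ ⊤))
      obtain ⟨r, rfl⟩ := mem_span_singleton.1 ht
      refine ⟨r * b, ?_⟩
      rw [map_add, map_smul, LinearMap.add_apply, LinearMap.smul_apply, hCt c hc a0 ha0, hb a0 ha0,
        zero_add, smul_smul])
  rw [inf_top_eq] at hK
  have hmn : ∀ s, ∃ μ ν : F, ∀ a ∈ A, m (m s w) a = μ • m w a + ν • a := by
    intro s
    have h1 := sup_le_sup_right hK (span F {w}) (hle (hE.2 s mem_top w hwE).1)
    obtain ⟨d, hd, t, ht, hsw⟩ := mem_sup.1 h1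
    obtain ⟨μ, rfl⟩ := mem_span_singleton.1 ht
    obtain ⟨c, hc, t, ht, rfl⟩ := mem_sup.1 hd
    obtain ⟨ν, rfl⟩ := mem_span_singleton.1 ht
    refine ⟨μ, ν * b, ?_⟩
    intro a ha
    rw [← hsw]
    simp only [map_add, map_smul, LinearMap.add_apply, LinearMap.smul_apply, hCt c hc a ha, hb a ha]
    rw [zero_add, smul_smul, add_comm]
  have hwns : ∀ g : F, ¬ ∀ a ∈ A, m w a = g • a := by
    intro g hg
    apply hwD
    have : w = (w - (g * b⁻¹) • z) + (g * b⁻¹) • z := by abel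
    rw [this]
    refine add_mem (mem_sup_left ?_) (mem_sup_right (smul_mem _ _ (mem_span_singleton_self z)))
    rw [hC]
    intro a ha
    rw [map_sub, map_smul, LinearMap.sub_apply, LinearMap.smul_apply, hg a ha, hb a ha, smul_smul,
      mul_assoc, inv_mul_cancel₀ hb0, mul_one, sub_self]
  by_cases hall : ∀ s, ∃ ν : F, ∀ a ∈ A, m (m s w) a = ν • a
  · have : ∀ s, ∀ a ∈ A, m s (m w a) = m w (m s a) := by
      intro s
      obtain ⟨ν, hν⟩ := hall s
      obtain ⟨a, ha, hane, r, t, hr, ht⟩ := hU s w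
      have h2 := hν a ha
      rw [leib_op hm, ht, map_smul, hr, map_smul, ht, smul_comm, sub_self] at h2
      have hν0 : ν = 0 := (smul_eq_zero.1 h2.symm).resolve_right hane
      intro a ha
      have h3 := hν a ha
      rw [hν0, zero_smul, leib_op hm] at h3
      exact sub_eq_zero.1 h3
    obtain ⟨g, hg⟩ := hscal w this
    exact hwns g hg
  push Not at hall
  obtain ⟨s0, hs0⟩ := hall
  obtain ⟨μ0, ν0, hmn0⟩ := hmn s0
  have hμ0 : μ0 ≠ 0 := by
    rintro rfl
    obtain ⟨a, ha, hne⟩ := hs0 ν0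
    apply hne
    rw [hmn0 a ha, zero_smul, zero_add]
  -- modified w
  obtain ⟨w', hw'⟩ : ∃ w' : L, w' = w + (ν0 * μ0⁻¹ * b⁻¹) • z := ⟨_, rfl⟩
  have hw'a : ∀ a ∈ A, m w' a = m w a + (ν0 * μ0⁻¹) • a := by
    intro a ha
    rw [hw', map_add, map_smul, LinearMap.add_apply, LinearMap.smul_apply, hb a ha, smul_smul,
      mul_assoc (ν0 * μ0⁻¹), inv_mul_cancel₀ hb0, mul_one]
  have hsw' : ∀ s, ∀ a ∈ A, m (m s w') a = m (m s w) a := by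
    intro s a ha
    rw [hw', map_add, map_smul, map_add, map_smul, LinearMap.add_apply, LinearMap.smul_apply,
      leib_op hm s z, hzc s a ha, sub_self, smul_zero, add_zero]
  have hs0w : ∀ a ∈ A, m (m s0 w') a = μ0 • m w' a := by
    intro a ha
    rw [hsw' s0 a ha, hmn0 a ha, hw'a a ha, smul_add, smul_smul, mul_comm ν0, ← mul_assoc,
      mul_inv_cancel₀ hμ0, one_mul]
  have heig : ∀ a ∈ A, a ≠ 0 → ∀ g : F, m w' a = g • a → g = 0 := by
    intro a ha hane g hg
    by_contra hg0
    obtain ⟨B, hs0B, hwB, hAB, hB⟩ := hW s0 w'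
    obtain ⟨G', G, hG', hG, hGK, v, hvG, hva, hv0, hGle⟩ := hB.first ⊥ (span F {a}) bot_le
      (by rw [span_singleton_le_iff_mem]; exact hAB ha)
      (by rwa [le_bot_iff, span_singleton_eq_bot])
    have hv0' : v ≠ 0 := by simpa using hv0
    obtain ⟨q, rfl⟩ := mem_span_singleton.1 hva
    have hva' : q • a ∈ A := smul_mem _ _ ha
    have hwv : m w' (q • a) = g • (q • a) := by rw [map_smul, hg, smul_comm]
    have hkill : ∀ r : F, r • (q • a) ∈ G' → r = 0 := by
      intro r hr
      have : r • (q • a) ∈ G' ⊓ span F {a} := ⟨hr, smul_mem _ _ hva⟩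
      have h0 : r • (q • a) = 0 := by simpa using hGK this
      exact (smul_eq_zero.1 h0).resolve_right hv0'
    generalize q • a = v at *
    obtain ⟨e, he, t, ht, hsv⟩ := mem_sup.1 (hGle (hG.2 s0 hs0B v hvG).1)
    obtain ⟨α, rfl⟩ := mem_span_singleton.1 ht
    have h1 := hs0w v hva'
    rw [leib_op hm, hwv, map_smul, ← hsv, map_add, map_smul, hwv] at h1
    have h2 : (μ0 * g) • v = g • e - m w' e := by
      rw [mul_smul, ← h1, smul_add, smul_comm α g]; abel
    have h3 := hkill (μ0 * g) (by
      rw [h2]; exact sub_mem (smul_mem _ _ he) (hG'.2 w' hwB e he).1)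
    rcases mul_eq_zero.1 h3 with h | h
    · exact hμ0 h
    · exact hg0 h
  have hinv : ∀ s, ∃ μ : F, ∀ a ∈ A, m (m s w') a = μ • m w' a := by
    intro s
    obtain ⟨μ, ν, h⟩ := hmn s
    have h' : ∀ a ∈ A, m (m s w') a = μ • m w' a + (ν - μ * (ν0 * μ0⁻¹)) • a := by
      intro a ha
      rw [hsw' s a ha, h a ha, hw'a a ha, smul_add, sub_smul, smul_smul]; abel
    refine ⟨μ, ?_⟩
    obtain ⟨a, ha, hane, r, t, hr, ht⟩ := hU s w'
    have ht0 := heig a ha hane t ht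
    have h2 := h' a ha
    rw [leib_op hm, ht, hr, ht0, map_smul, zero_smul, map_smul, ht, ht0, zero_smul, smul_zero,
      smul_zero, sub_self, zero_add] at h2
    have h3 := (smul_eq_zero.1 h2.symm).resolve_right hane
    intro a ha
    rw [h' a ha, h3, zero_smul, add_zero]
  have := hirr (A ⊓ LinearMap.ker (m w')) inf_le_left (by
      rintro x u ⟨hu, hu'⟩
      refine ⟨(hA x u hu).1, ?_⟩
      simp only [SetLike.mem_coe, LinearMap.mem_ker] at hu' ⊢
      obtain ⟨μ, h⟩ := hinv x
      have h1 := h u hu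
      rw [leib_op hm, hu', map_zero, smul_zero, zero_sub, neg_eq_zero] at h1
      exact h1)
  rcases this with h | h
  · obtain ⟨a, ha, hane, r, t, hr, ht⟩ := hU w' w'
    have hr0 := heig a ha hane r hr
    rw [hr0, zero_smul] at hr
    have : a ∈ A ⊓ LinearMap.ker (m w') := ⟨ha, hr⟩
    rw [h] at this
    exact hane (by simpa using this)
  · apply hwns (-(ν0 * μ0⁻¹))
    intro a ha
    have h1 := hw'a a ha
    have h2 : m w' a = 0 := by rw [← h] at ha; exact ha.2
    rw [h2] at h1
    rw [neg_smul]
    exact eq_neg_of_add_eq_zero_left h1.symm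

/-- Derivations with values in `A` vanishing on `A`. -/
def derA (m : L →ₗ[F] L →ₗ[F] L) (A : Submodule F L) : Submodule F (L →ₗ[F] L) where
  carrier := {δ | (∀ u, δ u ∈ A) ∧ (∀ a ∈ A, δ a = 0) ∧ ∀ u v, δ (m u v) = m u (δ v) + m (δ u) v}
  zero_mem' := by simp
  add_mem' := by
    rintro δ ε ⟨h1, h2, h3⟩ ⟨k1, k2, k3⟩
    refine ⟨fun u => add_mem (h1 u) (k1 u), fun a ha => ?_, fun u v => ?_⟩
    · rw [LinearMap.add_apply, h2 a ha, k2 a ha, add_zero]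
    · simp only [LinearMap.add_apply, h3, k3, map_add]; abel
  smul_mem' := by
    rintro r δ ⟨h1, h2, h3⟩
    refine ⟨fun u => smul_mem _ _ (h1 u), fun a ha => ?_, fun u v => ?_⟩
    · rw [LinearMap.smul_apply, h2 a ha, smul_zero]
    · simp only [LinearMap.smul_apply, h3, map_smul, smul_add]

/-- Projection onto an abelian ideal along a complementary subalgebra is a derivation. -/
theorem exists_proj (m : L →ₗ[F] L →ₗ[F] L) (A T : Submodule F L) (hA : IsIdeal m A)
    (hAA : ∀ a ∈ A, ∀ b ∈ A, m a b = 0) (hT : IsSubalg m T) (h : IsCompl A T) :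
    ∃ p : L →ₗ[F] L, (∀ u, p u ∈ A) ∧ (∀ a ∈ A, p a = a) ∧ (∀ t ∈ T, p t = 0) ∧
      ∀ u v, p (m u v) = m u (p v) + m (p u) v := by
  obtain ⟨p, hp1, hp2, hp3⟩ : ∃ p : L →ₗ[F] L, (∀ u, p u ∈ A) ∧ (∀ a ∈ A, p a = a) ∧
      (∀ t ∈ T, p t = 0) := by
    refine ⟨A.subtype ∘ₗ A.projectionOnto T h, fun u => ?_, fun a ha => ?_, fun t ht => ?_⟩
    · simp
    · have := Submodule.projectionOnto_apply_left h ⟨a, ha⟩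
      simp only [LinearMap.comp_apply] at this ⊢
      rw [this]; rfl
    · have := (Submodule.projectionOnto_apply_eq_zero_iff h (x := t)).2 ht
      simp only [LinearMap.comp_apply]
      rw [this]; rfl
  refine ⟨p, hp1, hp2, hp3, ?_⟩
  intro u v
  have htop : ∀ u : L, ∃ a ∈ A, ∃ t ∈ T, a + t = u := fun u =>
    mem_sup.1 (h.sup_eq_top ▸ (mem_top : u ∈ (⊤ : Submodule F L)))
  obtain ⟨a, ha, t, ht, rfl⟩ := htop u
  obtain ⟨b, hb, t', ht', rfl⟩ := htop v
  have h1 : m (a + t) (b + t') = (m a t' + m t b) + m t t' := by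
    simp only [map_add, LinearMap.add_apply, hAA a ha b hb]; abel
  rw [h1]
  simp only [map_add, hp2 a ha, hp2 b hb, hp3 t ht, hp3 t' ht', hp3 _ (hT t ht t' ht'),
    hp2 _ (hA a t' |> fun _ => (hA t' a ha).2), hp2 _ (hA t b hb).1, add_zero,
    LinearMap.add_apply, hAA a ha b hb, zero_add]
  abel

theorem right_action (m : L →ₗ[F] L →ₗ[F] L) (hm : IsLeibniz m)
    (A : Submodule F L) (hA : IsMinIdeal m A) :
    (∀ a ∈ A, ∀ x, m a x = 0) ∨ (∀ a ∈ A, ∀ x, m a x = - m x a) := by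
  obtain ⟨hAi, hAbot, hmin⟩ := hA
  have hz : ∀ u ∈ span F {u | ∃ a ∈ A, ∃ x, u = m a x + m x a}, ∀ y, m u y = 0 := by
    intro u hu y
    induction hu using Submodule.span_induction with
    | mem u hu =>
      obtain ⟨a, ha, x, rfl⟩ := hu
      rw [map_add, LinearMap.add_apply, leib_op hm a x, leib_op hm x a]; abel
    | zero => simp
    | add u v _ _ hu hv => rw [map_add, LinearMap.add_apply, hu, hv, add_zero]
    | smul r u _ hu => rw [map_smul, LinearMap.smul_apply, hu, smul_zero]
  have hid : IsIdeal m (span F {u | ∃ a ∈ A, ∃ x, u = m a x + m x a}) := by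
    intro y u hu
    refine ⟨?_, by rw [hz u hu y]; exact zero_mem _⟩
    induction hu using Submodule.span_induction with
    | mem u hu =>
      obtain ⟨a, ha, x, rfl⟩ := hu
      have h1 : m y (m a x + m x a) = (m (m y a) x + m x (m y a)) + (m a (m y x) + m (m y x) a) := by
        rw [map_add, hm y a x, hm y x a]; abel
      rw [h1]
      exact add_mem (subset_span ⟨_, (hAi y a ha).1, x, rfl⟩) (subset_span ⟨a, ha, _, rfl⟩)
    | zero => simp
    | add u v _ _ hu hv => rw [map_add]; exact add_mem hu hv
    | smul r u _ hu => rw [map_smul]; exact smul_mem _ _ hu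
  rcases hmin _ hid (by
    rw [span_le]
    rintro u ⟨a, ha, x, rfl⟩
    exact add_mem (hAi x a ha).2 (hAi x a ha).1) with h | h
  · right
    intro a ha x
    have : m a x + m x a ∈ span F {u | ∃ a ∈ A, ∃ x, u = m a x + m x a} :=
      subset_span ⟨a, ha, x, rfl⟩
    rw [h] at this
    exact eq_neg_of_add_eq_zero_left (by simpa using this)
  · left
    intro a ha x
    exact hz a (by rw [h]; exact ha) x

theorem core [FiniteDimensional F L] (m : L →ₗ[F] L →ₗ[F] L) (hm : IsLeibniz m)
    (hproper : ∀ S : Submodule F L, IsSubalg m S → S ≠ ⊤ → IsSupersolvable m S)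
    (A : Submodule F L) (hA : IsMinIdeal m A)
    (hAA : ∀ a ∈ A, ∀ b ∈ A, m a b = 0)
    (hline : ∀ a ∈ A, a ≠ 0 → ¬ ∀ x, ∃ r : F, m x a = r • a)
    (hch : WChain m ⊤ A) : ∃ x y : L, genBy m {x, y} = ⊤ := by
  have hR := right_action m hm A hA
  obtain ⟨hAi, hAbot, hmin⟩ := hA
  have hirr : ∀ U : Submodule F L, U ≤ A → (∀ x, ∀ u ∈ U, m x u ∈ U) → U = ⊥ ∨ U = A := by
    intro U hU hinv
    refine hmin U ?_ hU
    intro x u hu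
    refine ⟨hinv x u hu, ?_⟩
    rcases hR with h | h
    · rw [h u (hU hu) x]; exact zero_mem _
    · rw [h u (hU hu) x]; exact neg_mem (hinv x u hu)
  obtain ⟨C, hC⟩ : ∃ C : Submodule F L, ∀ x, x ∈ C ↔ ∀ a ∈ A, m x a = 0 := by
    refine ⟨{ carrier := {x | ∀ a ∈ A, m x a = 0}, zero_mem' := by simp, add_mem' := ?_,
              smul_mem' := ?_ }, fun x => Iff.rfl⟩
    · intro x y hx hy a ha
      rw [map_add, LinearMap.add_apply, hx a ha, hy a ha, add_zero]
    · intro r x hx a ha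
      rw [map_smul, LinearMap.smul_apply, hx a ha, smul_zero]
  have hAC : A ≤ C := fun a ha => (hC a).2 (hAA a ha)
  have hCi : IsIdeal m C := by
    intro x c hc
    constructor <;> rw [hC] <;> intro a ha <;>
      rw [leib_op hm, (hC c).1 hc a ha, (hC c).1 hc _ (hAi x a ha).1, map_zero, sub_zero]
  obtain ⟨a0, ha0, ha0'⟩ := Submodule.exists_mem_ne_zero_of_ne_bot hAbot
  have hCtop : ¬ (⊤ : Submodule F L) ≤ C := by
    intro h
    apply hline a0 ha0 ha0'
    intro x
    exact ⟨0, by rw [zero_smul]; exact (hC x).1 (h mem_top) a0 ha0⟩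
  obtain ⟨E', E, hE', hE, hK, z, hzE, -, hz, hle⟩ := hch.first C ⊤ hAC le_rfl hCtop
  rw [inf_top_eq] at hK
  have hzl : ∀ s, ∃ l : F, m s z - l • z ∈ C := by
    intro s
    obtain ⟨c, hc, t, ht, h⟩ := mem_sup.1 (hle (hE.2 s mem_top z hzE).1)
    obtain ⟨l, rfl⟩ := mem_span_singleton.1 ht
    refine ⟨l, ?_⟩
    rw [← h, add_sub_cancel_right]
    exact hK hc
  have hzk : ∀ a ∈ A, m z a = 0 → a = 0 := by
    rcases hirr (A ⊓ LinearMap.ker (m z)) inf_le_left (by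
      rintro x u ⟨hu, hu'⟩
      refine ⟨(hAi x u hu).1, ?_⟩
      simp only [SetLike.mem_coe, LinearMap.mem_ker] at hu' ⊢
      obtain ⟨l, h⟩ := hzl x
      have h1 := (hC _).1 h u hu
      rw [map_sub, map_smul, LinearMap.sub_apply, LinearMap.smul_apply, leib_op hm, hu', map_zero,
        smul_zero, zero_sub, sub_zero, neg_eq_zero] at h1
      exact h1) with h | h
    · intro a ha haz
      have : a ∈ A ⊓ LinearMap.ker (m z) := ⟨ha, haz⟩
      rw [h] at this
      simpa using this
    · exfalso
      apply hz
      rw [hC]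
      intro a ha
      rw [← h] at ha
      exact ha.2
  obtain ⟨x, y, hxy⟩ := exists_pair m hm hproper A C hAi hAbot hC hAC hirr hline hch z hz hzl hzk
  by_contra hno
  push Not at hno
  -- complements
  have hcompl : ∀ a ∈ A, ∀ b ∈ A, IsCompl A (genBy m {x + a, y + b}) := by
    intro a ha b hb
    have hsub := isSubalg_genBy m {x + a, y + b}
    have hxm : x + a ∈ genBy m {x + a, y + b} := subset_genBy m _ (by simp)
    have hym : y + b ∈ genBy m {x + a, y + b} := subset_genBy m _ (by simp)
    have hne := hno (x + a) (y + b)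
    generalize genBy m {x + a, y + b} = T at *
    have htop : A ⊔ T = ⊤ := by
      rw [sup_comm, eq_top_iff, ← hxy]
      refine sup_le (genBy_le m (isSubalg_sup hsub hAi) ?_) le_sup_right
      rintro u (rfl | rfl)
      · have := sub_mem (mem_sup_left (T := A) hxm) (mem_sup_right (S := T) ha)
        simpa using this
      · have := sub_mem (mem_sup_left (T := A) hym) (mem_sup_right (S := T) hb)
        simpa using this
    refine IsCompl.of_eq ?_ htop
    rcases hirr (A ⊓ T) inf_le_left (by
      rintro s u ⟨hu, hu'⟩
      refine ⟨(hAi s u hu).1, ?_⟩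
      obtain ⟨c, hc, t, ht, rfl⟩ := mem_sup.1 (htop ▸ (mem_top : s ∈ (⊤ : Submodule F L)))
      rw [map_add, LinearMap.add_apply, hAA c hc u hu, zero_add]
      exact hsub t ht u hu') with h | h
    · exact h
    · exfalso
      rw [inf_eq_left] at h
      rw [sup_eq_right.2 h] at htop
      exact hne htop
  have hsurj : ∀ a ∈ A, ∀ b ∈ A, ∃ δ ∈ derA m A, δ x = a ∧ δ y = b := by
    intro a ha b hb
    obtain ⟨p, p1, p2, p3, p4⟩ := exists_proj m A _ hAi hAA (isSubalg_genBy m _)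
      (hcompl 0 (zero_mem _) 0 (zero_mem _))
    obtain ⟨q, q1, q2, q3, q4⟩ := exists_proj m A _ hAi hAA (isSubalg_genBy m _) (hcompl a ha b hb)
    refine ⟨p - q, ⟨fun u => sub_mem (p1 u) (q1 u), fun c hc => ?_, fun u v => ?_⟩, ?_, ?_⟩
    · rw [LinearMap.sub_apply, p2 c hc, q2 c hc, sub_self]
    · simp only [LinearMap.sub_apply, p4, q4, map_sub]; abel
    · have h1 := p3 x (subset_genBy m _ (by simp))
      have h2 := q3 (x + a) (subset_genBy m _ (by simp))
      rw [map_add, q2 a ha] at h2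
      rw [LinearMap.sub_apply, h1, eq_neg_of_add_eq_zero_left h2, zero_sub, neg_neg]
    · have h1 := p3 y (subset_genBy m _ (by simp))
      have h2 := q3 (y + b) (subset_genBy m _ (by simp))
      rw [map_add, q2 b hb] at h2
      rw [LinearMap.sub_apply, h1, eq_neg_of_add_eq_zero_left h2, zero_sub, neg_neg]
  have hkillC : ∀ δ ∈ derA m A, ∀ c ∈ C, δ c = 0 := by
    rintro δ ⟨d1, d2, d3⟩
    by_contra hcon
    have hKD : ¬ C ≤ LinearMap.ker δ := fun h => hcon fun c hc => h hc
    obtain ⟨G', G, hG', hG, hGK, w, hwG, hwC, hwD, hGle⟩ :=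
      hch.first (LinearMap.ker δ) C (fun a ha => d2 a ha) le_top hKD
    apply hline (δ w) (d1 w) hwD
    intro s
    have hsw : m s w ∈ C := (hCi s w hwC).1
    obtain ⟨e, he, t, ht, h⟩ := mem_sup.1 (hGle (hG.2 s mem_top w hwG).1)
    obtain ⟨r, rfl⟩ := mem_span_singleton.1 ht
    have heC : e ∈ C := by
      have : e = m s w - r • w := by rw [← h]; abel
      rw [this]; exact sub_mem hsw (smul_mem _ _ hwC)
    have he0 : δ e = 0 := hGK ⟨he, heC⟩
    refine ⟨r, ?_⟩
    have h1 := d3 s w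
    have h2 : m (δ s) w = 0 := by
      rcases hR with h | h
      · exact h _ (d1 s) w
      · rw [h _ (d1 s) w, (hC w).1 hwC _ (d1 s), neg_zero]
    rw [h2, add_zero, ← h, map_add, he0, zero_add, map_smul] at h1
    exact h1.symm
  rcases hR with hR | hR
  · apply hCtop
    have hsq : ∀ u, m u u ∈ C := fun u => (hC _).2 fun a _ => sq_op hm u a
    have hx : x ∈ C := by
      rw [hC]
      intro a ha
      obtain ⟨δ, hδ, h1, -⟩ := hsurj a ha 0 (zero_mem _)
      have h2 := hkillC δ hδ _ (hsq x)
      rw [hδ.2.2, h1, hR a ha, add_zero] at h2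
      exact h2
    have hy : y ∈ C := by
      rw [hC]
      intro a ha
      obtain ⟨δ, hδ, -, h1⟩ := hsurj 0 (zero_mem _) a ha
      have h2 := hkillC δ hδ _ (hsq y)
      rw [hδ.2.2, h1, hR a ha, add_zero] at h2
      exact h2
    rw [← hxy]
    refine sup_le (genBy_le m (fun u _ v hv => (hCi u v hv).1) ?_) hAC
    rintro u (rfl | rfl)
    · exact hx
    · exact hy
  · have hinj : ∀ δ ∈ derA m A, δ z = 0 → δ = 0 := by
      intro δ hδ h0
      ext s
      obtain ⟨l, hl⟩ := hzl s
      have h1 := hkillC δ hδ _ hl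
      rw [map_sub, map_smul, hδ.2.2, h0, map_zero, hR _ (hδ.1 s), smul_zero, sub_zero, zero_add,
        neg_eq_zero] at h1
      exact hzk _ (hδ.1 s) h1
    let e1 : derA m A →ₗ[F] A :=
      ((LinearMap.applyₗ z).comp (derA m A).subtype).codRestrict A fun δ => δ.2.1 z
    let ex : derA m A →ₗ[F] A :=
      ((LinearMap.applyₗ x).comp (derA m A).subtype).codRestrict A fun δ => δ.2.1 x
    let ey : derA m A →ₗ[F] A :=
      ((LinearMap.applyₗ y).comp (derA m A).subtype).codRestrict A fun δ => δ.2.1 y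
    have i1 : Function.Injective e1 := by
      rw [injective_iff_map_eq_zero]
      intro δ h
      apply Subtype.ext
      exact hinj δ.1 δ.2 (congrArg Subtype.val h)
    have s2 : Function.Surjective (ex.prod ey) := by
      rintro ⟨⟨a, ha⟩, ⟨b, hb⟩⟩
      obtain ⟨δ, hδ, h1, h2⟩ := hsurj a ha b hb
      exact ⟨⟨δ, hδ⟩, Prod.ext (Subtype.ext h1) (Subtype.ext h2)⟩
    have f1 := LinearMap.finrank_le_finrank_of_injective i1
    have f2 := LinearMap.finrank_le_finrank_of_surjective s2
    rw [Module.finrank_prod] at f2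
    have f3 : finrank F A = 0 := by omega
    exact hAbot (Submodule.finrank_eq_zero.1 f3)

theorem abelian_of_min (m : L →ₗ[F] L →ₗ[F] L) (hm : IsLeibniz m) (hsolv : IsSolvableAlg m)
    (A : Submodule F L) (hA : IsMinIdeal m A) : ∀ a ∈ A, ∀ b ∈ A, m a b = 0 := by
  obtain ⟨hAi, hAbot, hmin⟩ := hA
  have hid : IsIdeal m (mprod m A A) := by
    intro x u hu
    have key : mprod m A A ≤ (mprod m A A).comap (m x) ⊓ (mprod m A A).comap (m.flip x) := by
      rw [map₂_le]
      intro a ha b hb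
      refine ⟨?_, ?_⟩
      · change m x (m a b) ∈ mprod m A A
        rw [hm]
        exact add_mem (apply_mem_map₂ _ (hAi x a ha).1 hb) (apply_mem_map₂ _ ha (hAi x b hb).1)
      · change m (m a b) x ∈ mprod m A A
        rw [leib_op hm]
        exact sub_mem (apply_mem_map₂ _ ha (hAi x b hb).2) (apply_mem_map₂ _ hb (hAi x a ha).2)
    exact key hu
  rcases hmin _ hid (map₂_le.2 fun a _ b hb => (hAi a b hb).1) with h | h
  · intro a ha b hb
    have := apply_mem_map₂ m ha hb
    rw [show map₂ m A A = ⊥ from h] at this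
    simpa using this
  · exfalso
    obtain ⟨n, hn⟩ := hsolv
    have hle : ∀ n, A ≤ derSeries m ⊤ n := by
      intro n
      induction n with
      | zero => exact le_top
      | succ n ih =>
        calc A = mprod m A A := h.symm
          _ ≤ _ := map₂_le_map₂ ih ih
    have := hle n
    rw [hn, le_bot_iff] at this
    exact hAbot this

theorem exists_min [FiniteDimensional F L] (m : L →ₗ[F] L →ₗ[F] L) (h : (⊤ : Submodule F L) ≠ ⊥) :
    ∃ A, IsMinIdeal m A := by
  obtain ⟨A, ⟨hA, hA0⟩, hmin⟩ := WellFounded.has_min (wellFounded_lt (α := Submodule F L))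
    {I | IsIdeal m I ∧ I ≠ ⊥} ⟨⊤, fun _ _ _ => ⟨mem_top, mem_top⟩, h⟩
  refine ⟨A, hA, hA0, ?_⟩
  intro J hJ hJA
  by_cases hJ0 : J = ⊥
  · exact Or.inl hJ0
  · right
    by_contra hne
    exact hmin J ⟨hJ, hJ0⟩ (lt_of_le_of_ne hJA hne)

theorem exists_quot (m : L →ₗ[F] L →ₗ[F] L) (A : Submodule F L) (hA : IsIdeal m A) :
    ∃ m' : (L ⧸ A) →ₗ[F] (L ⧸ A) →ₗ[F] (L ⧸ A),
      ∀ x y, m' (A.mkQ x) (A.mkQ y) = A.mkQ (m x y) := by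
  let f : L →ₗ[F] (L ⧸ A) →ₗ[F] (L ⧸ A) :=
    { toFun := fun x => A.mapQ A (m x) (fun a ha => (hA x a ha).1)
      map_add' := by
        intro x y
        ext u
        simp
      map_smul' := by
        intro r x
        ext u
        simp }
  refine ⟨A.liftQ f ?_, ?_⟩
  · intro a ha
    rw [LinearMap.mem_ker]
    ext u
    have := (hA u a ha).2
    simpa [f] using this
  · intro x y
    simp [f]

theorem WChain.map_quot {m : L →ₗ[F] L →ₗ[F] L} {A : Submodule F L}
    {m' : (L ⧸ A) →ₗ[F] (L ⧸ A) →ₗ[F] (L ⧸ A)}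
    (hm' : ∀ x y, m' (A.mkQ x) (A.mkQ y) = A.mkQ (m x y)) {S : Submodule F L}
    (h : WChain m S ⊥) : WChain m' (S.map A.mkQ) ⊥ := by
  obtain ⟨n, c, h0, hn, hle, hid, hs⟩ := h
  refine ⟨n, fun i => (c i).map A.mkQ, by simp [h0], by simp [hn],
    fun i hi => map_mono (hle i hi), fun i hi => ⟨map_mono (hid i hi).1, ?_⟩, ?_⟩
  · rintro _ ⟨x, hx, rfl⟩ _ ⟨y, hy, rfl⟩
    rw [hm', hm']
    exact ⟨mem_map_of_mem ((hid i hi).2 x hx y hy).1, mem_map_of_mem ((hid i hi).2 x hx y hy).2⟩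
  · intro i hi
    obtain ⟨v, hv⟩ := hs i hi
    refine ⟨A.mkQ v, ?_⟩
    have := map_mono (f := A.mkQ) hv
    rwa [Submodule.map_sup, Submodule.map_span, Set.image_singleton] at this

theorem WChain.comap_quot {m : L →ₗ[F] L →ₗ[F] L} {A : Submodule F L}
    {m' : (L ⧸ A) →ₗ[F] (L ⧸ A) →ₗ[F] (L ⧸ A)}
    (hm' : ∀ x y, m' (A.mkQ x) (A.mkQ y) = A.mkQ (m x y))
    (h : WChain m' ⊤ ⊥) : WChain m ⊤ A := by
  obtain ⟨n, c, h0, hn, hle, hid, hs⟩ := h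
  refine ⟨n, fun i => (c i).comap A.mkQ, ?_, by simp [hn],
    fun i hi => comap_mono (hle i hi), fun i hi => ⟨le_top, ?_⟩, ?_⟩
  · simp only [h0]
    exact A.ker_mkQ
  · intro x _ y hy
    simp only [mem_comap] at hy ⊢
    rw [← hm', ← hm']
    exact (hid i hi).2 _ mem_top _ hy
  · intro i hi
    obtain ⟨v, hv⟩ := hs i hi
    obtain ⟨v, rfl⟩ := A.mkQ_surjective v
    refine ⟨v, ?_⟩
    intro u hu
    obtain ⟨e, he, t, ht, h⟩ := mem_sup.1 (hv hu)
    obtain ⟨r, rfl⟩ := mem_span_singleton.1 ht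
    refine mem_sup.2 ⟨u - r • v, ?_, r • v, smul_mem _ _ (mem_span_singleton_self v), by abel⟩
    simp only [mem_comap]
    rw [map_sub, map_smul, ← h, add_sub_cancel_right]
    exact he

theorem WChain.extend {m : L →ₗ[F] L →ₗ[F] L} {a : L}
    (h : WChain m ⊤ (span F {a})) : WChain m ⊤ ⊥ := by
  obtain ⟨n, c, h0, hn, hle, hid, hs⟩ := h
  refine ⟨n + 1, fun i => match i with | 0 => ⊥ | i + 1 => c i, rfl, hn, ?_, ?_, ?_⟩
  · rintro (_ | i) hi
    · exact bot_le
    · exact hle i (by omega)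
  · rintro (_ | i) hi
    · refine ⟨bot_le, ?_⟩
      rintro x - y hy
      obtain rfl : y = 0 := by simpa using hy
      simp
    · exact hid i (by omega)
  · rintro (_ | i) hi
    · exact ⟨a, by simp [h0]⟩
    · exact hs i (by omega)

theorem derSeries_quot {m : L →ₗ[F] L →ₗ[F] L} {A : Submodule F L}
    {m' : (L ⧸ A) →ₗ[F] (L ⧸ A) →ₗ[F] (L ⧸ A)}
    (hm' : ∀ x y, m' (A.mkQ x) (A.mkQ y) = A.mkQ (m x y)) (n : ℕ) :
    derSeries m' ⊤ n ≤ (derSeries m ⊤ n).map A.mkQ := by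
  induction n with
  | zero => simp [derSeries, Submodule.map_top, range_mkQ]
  | succ n ih =>
    refine map₂_le.2 ?_
    intro x hx y hy
    obtain ⟨x, hx', rfl⟩ := ih hx
    obtain ⟨y, hy', rfl⟩ := ih hy
    rw [hm']
    exact mem_map_of_mem (apply_mem_map₂ m hx' hy')

end Helpers

universe u v

theorem aux_induction {F : Type u} [Field F] (n : ℕ) :
    ∀ (L : Type v) [AddCommGroup L] [Module F L] [FiniteDimensional F L]
    (_ : finrank F L = n)
    (m : L →ₗ[F] L →ₗ[F] L) (_ : IsLeibniz m)
    (_ : IsSolvableAlg m)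
    (_ : ¬ IsSupersolvable m (⊤ : Submodule F L))
    (_ : ∀ S : Submodule F L, IsSubalg m S → S ≠ ⊤ → IsSupersolvable m S),
    ∃ x y : L, genBy m {x, y} = ⊤ := by
  induction n using Nat.strong_induction_on with
  | _ n ih =>
  intro L _ _ _ hn m hm hsolv hns hproper
  have htop : (⊤ : Submodule F L) ≠ ⊥ := by
    intro h
    apply hns
    refine ⟨0, fun _ => ⊥, rfl, h.symm, by simp, ?_, ?_⟩
    · intro i _
      refine ⟨bot_le, ?_⟩
      rintro x - y hy
      obtain rfl : y = 0 := by simpa using hy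
      simp
    · intro i hi
      obtain rfl : i = 0 := by omega
      simp
  obtain ⟨A, hA⟩ := exists_min m htop
  obtain ⟨m', hm'⟩ := exists_quot m A hA.1
  by_cases hq : IsSupersolvable m' (⊤ : Submodule F (L ⧸ A))
  · have hch := (wchain_of_ss hq).comap_quot hm'
    have hAA := abelian_of_min m hm hsolv A hA
    refine core m hm hproper A hA hAA ?_ hch
    intro a ha hane hinv
    apply hns
    -- right multiplication of `a`
    apply ss_of_wchain
    have hR : ∀ x, ∃ r : F, m a x = r • a := by
      intro x
      rcases right_action m hm A hA with h | h
      · exact ⟨0, by rw [h a ha, zero_smul]⟩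
      · obtain ⟨r, hr⟩ := hinv x
        exact ⟨-r, by rw [h a ha, hr, neg_smul]⟩
    · have hid : IsIdeal m (span F {a}) := by
        intro x u hu
        obtain ⟨t, rfl⟩ := mem_span_singleton.1 hu
        obtain ⟨r, hr⟩ := hinv x
        obtain ⟨q, hq⟩ := hR x
        constructor
        · rw [map_smul, hr]
          exact smul_mem _ _ (smul_mem _ _ (mem_span_singleton_self a))
        · rw [map_smul, LinearMap.smul_apply, hq]
          exact smul_mem _ _ (smul_mem _ _ (mem_span_singleton_self a))
      rcases hA.2.2 _ hid (by rwa [span_singleton_le_iff_mem]) with h | h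
      · exact absurd (span_singleton_eq_bot.1 h) hane
      · rw [← h] at hch
        exact hch.extend
  · have hL : ∃ x y : L ⧸ A, genBy m' {x, y} = ⊤ := by
      refine ih (finrank F (L ⧸ A)) ?_ (L ⧸ A) rfl m' ?_ ?_ hq ?_
      · have h1 := Submodule.finrank_quotient_add_finrank A
        have h2 : finrank F A ≠ 0 := fun h => hA.2.1 (Submodule.finrank_eq_zero.1 h)
        omega
      · intro a b c
        obtain ⟨a, rfl⟩ := A.mkQ_surjective a
        obtain ⟨b, rfl⟩ := A.mkQ_surjective b
        obtain ⟨c, rfl⟩ := A.mkQ_surjective c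
        simp only [hm', ← map_add]
        rw [hm a b c]
      · obtain ⟨k, hk⟩ := hsolv
        refine ⟨k, ?_⟩
        have := derSeries_quot hm' k
        rwa [hk, Submodule.map_bot, le_bot_iff] at this
      · intro S hS hSt
        have h1 : IsSupersolvable m (S.comap A.mkQ) := by
          refine hproper _ ?_ ?_
          · intro x hx y hy
            simp only [mem_comap] at *
            rw [← hm']
            exact hS _ hx _ hy
          · intro h
            apply hSt
            rw [← Submodule.map_comap_eq_of_surjective A.mkQ_surjective S, h, Submodule.map_top,
              range_mkQ]
        have h2 := (wchain_of_ss h1).map_quot hm'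
        rw [Submodule.map_comap_eq_of_surjective A.mkQ_surjective] at h2
        exact ss_of_wchain h2
    obtain ⟨x, y, hxy⟩ := hL
    obtain ⟨x, rfl⟩ := A.mkQ_surjective x
    obtain ⟨y, rfl⟩ := A.mkQ_surjective y
    refine ⟨x, y, ?_⟩
    by_contra hne
    apply hq
    have h1 := (wchain_of_ss (hproper _ (isSubalg_genBy m _) hne)).map_quot hm'
    have h2 : (genBy m {x, y}).map A.mkQ = ⊤ := by
      rw [eq_top_iff, ← hxy]
      refine genBy_le m' ?_ ?_
      · rintro _ ⟨u, hu, rfl⟩ _ ⟨v, hv, rfl⟩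
        rw [hm']
        exact mem_map_of_mem (isSubalg_genBy m _ u hu v hv)
      · rintro u (rfl | rfl)
        · exact mem_map_of_mem (subset_genBy m _ (by simp))
        · exact mem_map_of_mem (subset_genBy m _ (by simp))
    rw [h2] at h1
    exact ss_of_wchain h1


/-- A finite-dimensional solvable Leibniz algebra that is minimally
non-supersolvable (not supersolvable, but every proper subalgebra is supersolvable) is
two-generated. -/
theorem minimally_non_supersolvable_two_generated
    {F : Type*} [Field F] {L : Type*} [AddCommGroup L] [Module F L]
    [FiniteDimensional F L]
    (m : L →ₗ[F] L →ₗ[F] L) (hm : IsLeibniz m)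
    (hsolv : IsSolvableAlg m)
    (hnotsuper : ¬ IsSupersolvable m (⊤ : Submodule F L))
    (hproper : ∀ S : Submodule F L, IsSubalg m S → S ≠ ⊤ → IsSupersolvable m S) :
    ∃ x y : L, genBy m {x, y} = ⊤ := by
  exact aux_induction (finrank F L) L rfl m hm hsolv hnotsuper hproper
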